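/- arXiv:0909.2304 — 3 statements merged into one kernel-verified Lean document; each statement's English description precedes it below -/
import Mathlib

section
/- Let q = 2^n, let k ≥ 2, and let f(x) = x^{2^k+1} + g(x) where g(x) = Σ_{j=0}^{2^{k-1}+1} a_j x^j ∈ F_q[x] has degree at most 2^{k-1}+1. Suppose there exists an index j with 3 ≤ j ≤ 2^{k-1}+1 such that a_j ≠ 0 and φ_j is absolutely irreducible. Then φ_f is absolutely irreducible. -/
open MvPolynomial

/-- The polynomial `(x+y)(x+z)(y+z)` in `F[x,y,z]`. -/
noncomputable def e3 (F : Type*) [CommRing F] : MvPolynomial (Fin 3) F :=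
  (X 0 + X 1) * (X 0 + X 2) * (X 1 + X 2)

/-- The polynomial `f(x) + f(y) + f(z) + f(x+y+z)` in `F[x,y,z]`. -/
noncomputable def fsum {F : Type*} [CommRing F] (f : Polynomial F) :
    MvPolynomial (Fin 3) F :=
  Polynomial.aeval (X 0 : MvPolynomial (Fin 3) F) f +
    Polynomial.aeval (X 1 : MvPolynomial (Fin 3) F) f +
    Polynomial.aeval (X 2 : MvPolynomial (Fin 3) F) f +
    Polynomial.aeval (X 0 + X 1 + X 2 : MvPolynomial (Fin 3) F) f

/-- The polynomial `x^j + y^j + z^j + (x+y+z)^j` in `F[x,y,z]`. -/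
noncomputable def powSum (F : Type*) [CommRing F] (j : ℕ) : MvPolynomial (Fin 3) F :=
  X 0 ^ j + X 1 ^ j + X 2 ^ j + (X 0 + X 1 + X 2) ^ j

section helpers

attribute [local instance] MvPolynomial.gradedAlgebra

lemma hc_mul {K : Type*} [CommRing K] (P Q : MvPolynomial (Fin 3) K) (m : ℕ) :
    homogeneousComponent m (P * Q) = ∑ ij ∈ Finset.HasAntidiagonal.antidiagonal m,
      homogeneousComponent ij.1 P * homogeneousComponent ij.2 Q := by
  have h := DirectSum.coe_mul_apply_eq_sum_antidiagonal (homogeneousSubmodule (Fin 3) K)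
    (DirectSum.decompose (homogeneousSubmodule (Fin 3) K) P)
    (DirectSum.decompose (homogeneousSubmodule (Fin 3) K) Q) m
  rw [← DirectSum.decompose_mul] at h
  have key : ∀ (p : MvPolynomial (Fin 3) K) (i : ℕ),
      ((DirectSum.decompose (homogeneousSubmodule (Fin 3) K) p i :
        homogeneousSubmodule (Fin 3) K i) : MvPolynomial (Fin 3) K) =
        homogeneousComponent i p := fun p i => decomposition.decompose'_apply p i
  simp only [key] at h
  exact h

end helpers

lemma hc_hom_mul {K : Type*} [CommRing K] {A : MvPolynomial (Fin 3) K} {a : ℕ}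
    (hA : A.IsHomogeneous a) (B : MvPolynomial (Fin 3) K) (m : ℕ) :
    homogeneousComponent (a + m) (A * B) = A * homogeneousComponent m B := by
  rw [hc_mul, Finset.sum_eq_single (a, m)]
  · simp only [homogeneousComponent_eq_self hA]
  · rintro ⟨i, j⟩ hij hne
    rw [Finset.HasAntidiagonal.mem_antidiagonal] at hij
    simp only at hij
    have : i ≠ a := by
      rintro rfl
      exact hne (by simp; omega)
    simp only [homogeneousComponent_of_mem hA, if_neg this, zero_mul]
  · simp

lemma hom_dvd_hc {K : Type*} [CommRing K] {A : MvPolynomial (Fin 3) K} {a : ℕ}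
    (hA : A.IsHomogeneous a) (B : MvPolynomial (Fin 3) K) (m : ℕ) :
    A ∣ homogeneousComponent m (B * A) := by
  rw [hc_mul]
  refine Finset.dvd_sum fun ij _ => ?_
  rw [homogeneousComponent_of_mem hA]
  split_ifs <;> simp

lemma e3_hom (K : Type*) [CommRing K] : (e3 K).IsHomogeneous 3 := by
  have h : ∀ i : Fin 3, (X i : MvPolynomial (Fin 3) K).IsHomogeneous 1 := isHomogeneous_X K
  exact (((h 0).add (h 1)).mul ((h 0).add (h 2))).mul ((h 1).add (h 2))

lemma powSum_hom (K : Type*) [CommRing K] (j : ℕ) : (powSum K j).IsHomogeneous j := by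
  have h : ∀ i : Fin 3, (X i : MvPolynomial (Fin 3) K).IsHomogeneous 1 := isHomogeneous_X K
  have := ((((h 0).pow j).add ((h 1).pow j)).add ((h 2).pow j)).add
    ((((h 0).add (h 1)).add (h 2)).pow j)
  rwa [one_mul] at this

lemma fsum_eq {K : Type*} [CommRing K] (f : Polynomial K) :
    fsum f = ∑ i ∈ Finset.range (f.natDegree + 1), C (f.coeff i) * powSum K i := by
  simp only [fsum, powSum, Polynomial.aeval_eq_sum_range, ← Finset.sum_add_distrib,
    MvPolynomial.smul_eq_C_mul, mul_add]

lemma hc_fsum {K : Type*} [CommRing K] (f : Polynomial K) (m : ℕ) :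
    homogeneousComponent m (fsum f) = C (f.coeff m) * powSum K m := by
  rw [fsum_eq, map_sum]
  simp only [homogeneousComponent_C_mul]
  rw [Finset.sum_eq_single m]
  · rw [homogeneousComponent_eq_self (powSum_hom K m)]
  · intro b _ hb
    rw [homogeneousComponent_of_mem (powSum_hom K b)]
    simp [hb.symm]
  · intro h
    rw [Polynomial.coeff_eq_zero_of_natDegree_lt (by simpa using h)]
    simp

lemma e3_hc {K : Type*} [CommRing K] (f : Polynomial K) (Φ : MvPolynomial (Fin 3) K)
    (h : e3 K * Φ = fsum f) (m : ℕ) :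
    e3 K * homogeneousComponent m Φ = C (f.coeff (3 + m)) * powSum K (3 + m) := by
  rw [← hc_fsum, ← h, hc_hom_mul (e3_hom K)]

lemma lin_ne {K : Type*} [Field K] (i j : Fin 3) (hij : i ≠ j) (c : K) :
    (X i + C c * X j : MvPolynomial (Fin 3) K) ≠ 0 := by
  intro h
  have := congrArg (MvPolynomial.eval (Pi.single i 1 : Fin 3 → K)) h
  simp [hij.symm] at this

lemma e3_ne (K : Type*) [Field K] : e3 K ≠ 0 := by
  have h1 := lin_ne (K := K) 0 1 (by decide) 1
  have h2 := lin_ne (K := K) 0 2 (by decide) 1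
  have h3 := lin_ne (K := K) 1 2 (by decide) 1
  simp only [map_one, one_mul] at h1 h2 h3
  exact mul_ne_zero (mul_ne_zero h1 h2) h3

lemma powSum_gold (K : Type*) [Field K] [CharP K 2] (k : ℕ) :
    powSum K (2 ^ k + 1) =
      (X 0 + X 2) ^ (2 ^ k) * (X 1 + X 2) + (X 0 + X 2) * (X 1 + X 2) ^ (2 ^ k) := by
  have h2 : (2 : MvPolynomial (Fin 3) K) = 0 := CharTwo.two_eq_zero
  simp only [powSum, pow_succ _ (2 ^ k), add_pow_char_pow]
  linear_combination (X 0 * X 0 ^ 2 ^ k + X 1 * X 1 ^ 2 ^ k) * h2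

lemma powSum_gold_ne (K : Type*) [Field K] [CharP K 2] (k : ℕ) (hk : 2 ≤ k) :
    powSum K (2 ^ k + 1) ≠ 0 := by
  intro h
  rw [powSum_gold] at h
  have h := congrArg (pderiv (0 : Fin 3)) h
  have h1 := lin_ne (K := K) 1 2 (by decide) 1
  simp only [map_one, one_mul] at h1
  have hz : ((2 : MvPolynomial (Fin 3) K)) = 0 := CharTwo.two_eq_zero
  have hk0 : k ≠ 0 := by omega
  simp [Derivation.leibniz_pow, pderiv_X, hz, hk0] at h
  exact h1 h

lemma prime_sq_not_dvd (K : Type*) [Field K] [CharP K 2] (k : ℕ) (hk : 2 ≤ k)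
    (p r : MvPolynomial (Fin 3) K) (hp : Prime p) (h : p * p * r = powSum K (2 ^ k + 1)) : False := by
  rw [powSum_gold] at h
  have hz : ((2 : MvPolynomial (Fin 3) K)) = 0 := CharTwo.two_eq_zero
  have hk0 : k ≠ 0 := by omega
  have d0 : ∀ i, p ∣ pderiv i (p * p * r) := by
    intro i
    simp only [pderiv_mul]
    exact ⟨pderiv i p * r + pderiv i p * r + p * pderiv i r, by ring⟩
  have a0 := d0 0
  have a1 := d0 1
  rw [h] at a0 a1
  simp [Derivation.leibniz_pow, pderiv_X, hz, hk0] at a0 a1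
  replace a0 := hp.dvd_of_dvd_pow a0
  replace a1 := hp.dvd_of_dvd_pow a1
  have hv : Irreducible (X 1 + X 2 : MvPolynomial (Fin 3) K) := by
    apply irreducible_of_totalDegree_eq_one
    · have h1 := lin_ne (K := K) 1 2 (by decide) 1
      simp only [map_one, one_mul] at h1
      exact ((isHomogeneous_X K 1).add (isHomogeneous_X K 2)).totalDegree h1
    · intro x hx
      have := hx (Finsupp.single 1 1)
      have h21 : ¬ (Finsupp.single (2 : Fin 3) 1 = Finsupp.single (1 : Fin 3) 1) := by
        rw [Finsupp.single_left_inj] <;> decide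
      simp [coeff_X, h21] at this
      simpa using this
  have h3 : (X 1 + X 2 : MvPolynomial (Fin 3) K) ∣ X 0 + X 2 :=
    ((hp.irreducible.dvd_comm hv).1 a0).trans a1
  have := map_dvd (MvPolynomial.eval (Pi.single 0 1 : Fin 3 → K)) h3
  simp at this

lemma gold_linear (K : Type*) [Field K] [IsAlgClosed K] [CharP K 2] (k : ℕ) (hk : 2 ≤ k)
    (p : MvPolynomial (Fin 3) K) (hp : Prime p) (h : p ∣ powSum K (2 ^ k + 1)) :
    p.totalDegree ≤ 1 := by
  rw [powSum_gold] at h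
  have hX : ∀ i : Fin 3, (X i : MvPolynomial (Fin 3) K).IsHomogeneous 1 := isHomogeneous_X K
  by_cases hv : p ∣ X 1 + X 2
  · have h1 := lin_ne (K := K) 1 2 (by decide) 1
    simp only [map_one, one_mul] at h1
    exact (totalDegree_le_of_dvd_of_isDomain hv h1).trans ((hX 1).add (hX 2)).totalDegree_le
  obtain ⟨α, hα⟩ : ∃ α : K, p ∣ (X 0 + X 2) - C α * (X 1 + X 2) := by
    have hsp := IsAlgClosed.splits (Polynomial.X ^ (2 ^ k) - Polynomial.X : Polynomial K)
    have : (Ideal.span {p}).IsPrime := (Ideal.span_singleton_prime hp.ne_zero).2 hp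
    let R := MvPolynomial (Fin 3) K ⧸ Ideal.span {p}
    let L := FractionRing R
    let π : MvPolynomial (Fin 3) K →+* L := (algebraMap R L).comp (Ideal.Quotient.mk _)
    have hπ : ∀ a, π a = 0 ↔ p ∣ a := by
      intro a
      simp only [π, RingHom.comp_apply]
      rw [FaithfulSMul.algebraMap_eq_zero_iff, Ideal.Quotient.eq_zero_iff_mem,
        Ideal.mem_span_singleton]
    have hv' : π (X 1 + X 2) ≠ 0 := by rwa [Ne, hπ]
    have hN := (hπ _).2 h
    rw [map_add, map_mul, map_mul, map_pow, map_pow] at hN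
    set u := π (X 0 + X 2)
    set v := π (X 1 + X 2)
    have h2L : (2 : L) = 0 := by
      have : (2 : MvPolynomial (Fin 3) K) = 0 := CharTwo.two_eq_zero
      have h := congrArg π this
      rwa [map_ofNat, map_zero] at h
    have ht : (Polynomial.X ^ (2 ^ k) - Polynomial.X : Polynomial K).eval₂ (π.comp C) (u / v) = 0 := by
      have : u ^ 2 ^ k * v = u * v ^ 2 ^ k := by linear_combination hN - u * v ^ 2 ^ k * h2L
      simp only [Polynomial.eval₂_sub, Polynomial.eval₂_pow, Polynomial.eval₂_X]
      rw [sub_eq_zero, div_pow, div_eq_div_iff (pow_ne_zero _ hv') hv', this]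
    have hne : (Polynomial.X ^ (2 ^ k) - Polynomial.X : Polynomial K) ≠ 0 :=
      FiniteField.X_pow_card_sub_X_ne_zero K (Nat.one_lt_two_pow (by omega))
    rw [hsp.eq_prod_roots, Polynomial.eval₂_mul, Polynomial.eval₂_C, mul_eq_zero] at ht
    rcases ht with ht | ht
    · rw [map_eq_zero, Polynomial.leadingCoeff_eq_zero] at ht
      exact absurd ht hne
    · rw [Polynomial.eval₂_multiset_prod, Multiset.prod_eq_zero_iff] at ht
      simp only [Multiset.mem_map] at ht
      obtain ⟨_, ⟨α, _, rfl⟩, h0⟩ := ht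
      refine ⟨α, ?_⟩
      rw [← hπ, map_sub, map_mul]
      simp only [Polynomial.eval₂_sub, Polynomial.eval₂_X, Polynomial.eval₂_C,
        RingHom.comp_apply] at h0
      rw [sub_eq_zero, div_eq_iff hv'] at h0
      rw [sub_eq_zero]
      exact h0
  have hh : ((X 0 + X 2) - C α * (X 1 + X 2) : MvPolynomial (Fin 3) K).IsHomogeneous 1 :=
    ((hX 0).add (hX 2)).sub (((hX 1).add (hX 2)).C_mul α)
  refine (totalDegree_le_of_dvd_of_isDomain hα ?_).trans hh.totalDegree_le
  intro h0
  have := congrArg (MvPolynomial.eval (Pi.single 0 1 : Fin 3 → K)) h0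
  simp at this

/-- The arithmetic core: a factor of degree at most half is homogeneous. -/
lemma small_factor_hom {K : Type*} [Field K] (P Q : MvPolynomial (Fin 3) K) (s t : ℕ)
    (hs : P.totalDegree = s) (ht : Q.totalDegree = t) (hts : t ≤ s)
    (hPs : homogeneousComponent s P ≠ 0) (hQt : homogeneousComponent t Q ≠ 0)
    (hcop : IsRelPrime (homogeneousComponent t Q) (homogeneousComponent s P))
    (hgap : ∀ m, s ≤ m → m < s + t → homogeneousComponent m (P * Q) = 0) :
    ∀ i, 1 ≤ i → i ≤ t →
      homogeneousComponent (s - i) P = 0 ∧ homogeneousComponent (t - i) Q = 0 := by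
  intro i
  induction i using Nat.strong_induction_on with
  | _ i ih =>
    intro hi1 hit
    have h := hgap (s + t - i) (by omega) (by omega)
    rw [hc_mul, Finset.sum_eq_add (s, t - i) (s - i, t)] at h
    · simp only at h
      have hd : homogeneousComponent t Q ∣
          homogeneousComponent s P * homogeneousComponent (t - i) Q :=
        ⟨-homogeneousComponent (s - i) P, by linear_combination h⟩
      have hd2 := hcop.dvd_of_dvd_mul_left hd
      have hz : homogeneousComponent (t - i) Q = 0 := by
        by_contra hne
        have h1 := totalDegree_le_of_dvd_of_isDomain hd2 hne
        rw [(homogeneousComponent_isHomogeneous t Q).totalDegree hQt,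
          (homogeneousComponent_isHomogeneous (t - i) Q).totalDegree hne] at h1
        omega
      refine ⟨?_, hz⟩
      rw [hz, mul_zero, zero_add] at h
      exact (mul_eq_zero.1 h).resolve_right hQt
    · intro hh
      simp only [Prod.mk.injEq] at hh
      omega
    · rintro ⟨a, b⟩ hab ⟨h1, h2⟩
      rw [Finset.HasAntidiagonal.mem_antidiagonal] at hab
      simp only [ne_eq, Prod.mk.injEq] at hab h1 h2 ⊢
      by_cases ha : s < a
      · rw [homogeneousComponent_eq_zero a P (by omega), zero_mul]
      by_cases hb : t < b
      · rw [homogeneousComponent_eq_zero b Q (by omega), mul_zero]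
      have := (ih (s - a) (by omega) (by omega) (by omega)).1
      rw [show s - (s - a) = a by omega] at this
      rw [this, zero_mul]
    · intro hh
      exact absurd (by rw [Finset.HasAntidiagonal.mem_antidiagonal]; simp only; omega) hh
    · intro hh
      exact absurd (by rw [Finset.HasAntidiagonal.mem_antidiagonal]; simp only; omega) hh

lemma hc_top_ne {K : Type*} [Field K] (P : MvPolynomial (Fin 3) K) (hP : P ≠ 0) :
    homogeneousComponent P.totalDegree P ≠ 0 := by
  intro h
  obtain ⟨d, hd, hdeg⟩ := Finset.exists_mem_eq_sup P.support (support_nonempty.2 hP)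
    (fun s => s.sum fun _ e => e)
  have h1 := congrArg (coeff d) h
  rw [coeff_homogeneousComponent, if_pos, coeff_zero] at h1
  · exact (mem_support_iff.1 hd) h1
  · exact hdeg.symm

section mainK

variable {K : Type*} [Field K] [IsAlgClosed K] [CharP K 2]

lemma phi_totalDegree {k : ℕ} (hk : 2 ≤ k) {f : Polynomial K} {Φ : MvPolynomial (Fin 3) K}
    (h : e3 K * Φ = fsum f) (hlead : f.coeff (2 ^ k + 1) = 1)
    (hz : ∀ m, 2 ^ (k - 1) + 1 < m → m ≠ 2 ^ k + 1 → f.coeff m = 0) :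
    Φ ≠ 0 ∧ Φ.totalDegree = 2 ^ k - 2 ∧
      e3 K * homogeneousComponent (2 ^ k - 2) Φ = powSum K (2 ^ k + 1) ∧
      ∀ m, 2 ^ (k - 1) - 2 < m → m ≠ 2 ^ k - 2 → homogeneousComponent m Φ = 0 := by
  have hpow : 2 ^ k = 2 * 2 ^ (k - 1) := by
    rw [← pow_succ']; congr 1; omega
  have h2 : 2 ≤ 2 ^ (k - 1) := by
    calc 2 = 2 ^ 1 := rfl
      _ ≤ _ := Nat.pow_le_pow_right (by norm_num) (by omega)
  have htop : e3 K * homogeneousComponent (2 ^ k - 2) Φ = powSum K (2 ^ k + 1) := by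
    rw [e3_hc f Φ h, show 3 + (2 ^ k - 2) = 2 ^ k + 1 by omega, hlead, C_1, one_mul]
  have hgap : ∀ m, 2 ^ (k - 1) - 2 < m → m ≠ 2 ^ k - 2 → homogeneousComponent m Φ = 0 := by
    intro m hm hm'
    have := e3_hc f Φ h m
    rw [hz (3 + m) (by omega) (by omega), C_0, zero_mul] at this
    exact (mul_eq_zero.1 this).resolve_left (e3_ne K)
  have htopne : homogeneousComponent (2 ^ k - 2) Φ ≠ 0 := by
    intro h0
    rw [h0, mul_zero] at htop
    exact powSum_gold_ne K k hk htop.symm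
  have hΦ : Φ ≠ 0 := by
    rintro rfl
    simp at htopne
  refine ⟨hΦ, ?_, htop, hgap⟩
  by_contra hne
  have h1 : ¬ Φ.totalDegree < 2 ^ k - 2 := fun hlt =>
    htopne (homogeneousComponent_eq_zero _ _ hlt)
  exact hc_top_ne Φ hΦ (hgap _ (by omega) hne)

lemma factor_case {k : ℕ} (hk : 2 ≤ k) {f : Polynomial K} {Φ : MvPolynomial (Fin 3) K}
    (h : e3 K * Φ = fsum f) (hlead : f.coeff (2 ^ k + 1) = 1)
    (hz : ∀ m, 2 ^ (k - 1) + 1 < m → m ≠ 2 ^ k + 1 → f.coeff m = 0)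
    {j : ℕ} (hj3 : 3 ≤ j) (haj : f.coeff j ≠ 0)
    {φj : MvPolynomial (Fin 3) K} (hφj : e3 K * φj = powSum K j) (hirr : Irreducible φj)
    (P Q : MvPolynomial (Fin 3) K) (hPQ : Φ = P * Q) (hle : Q.totalDegree ≤ P.totalDegree) :
    IsUnit Q := by
  obtain ⟨hΦ, hdeg, htop, hgap⟩ := phi_totalDegree hk h hlead hz
  have hP : P ≠ 0 := by rintro rfl; simp [hPQ] at hΦ
  have hQ : Q ≠ 0 := by rintro rfl; simp [hPQ] at hΦ
  have hst : P.totalDegree + Q.totalDegree = 2 ^ k - 2 := by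
    rw [← hdeg, hPQ, totalDegree_mul_of_isDomain hP hQ]
  have hpow : 2 ^ k = 2 * 2 ^ (k - 1) := by
    rw [← pow_succ']; congr 1; omega
  have hPs := hc_top_ne P hP
  have hQt := hc_top_ne Q hQ
  generalize hs : P.totalDegree = s at *
  generalize ht : Q.totalDegree = t at *
  -- top component
  have hmul : homogeneousComponent (2 ^ k - 2) Φ =
      homogeneousComponent s P * homogeneousComponent t Q := by
    rw [hPQ, ← hst, hc_mul, Finset.sum_eq_single (s, t)]
    · rintro ⟨a, b⟩ hab hne
      rw [Finset.HasAntidiagonal.mem_antidiagonal] at hab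
      simp only [ne_eq, Prod.mk.injEq] at hab hne ⊢
      by_cases ha : s < a
      · rw [homogeneousComponent_eq_zero a P (by omega), zero_mul]
      · rw [homogeneousComponent_eq_zero b Q (by omega), mul_zero]
    · intro hh
      exact absurd (by rw [Finset.HasAntidiagonal.mem_antidiagonal]) hh
  rw [hmul] at htop
  have hcop : IsRelPrime (homogeneousComponent t Q) (homogeneousComponent s P) := by
    rw [UniqueFactorizationMonoid.isRelPrime_iff_no_prime_factors hQt]
    rintro d ⟨a, ha⟩ ⟨b, hb⟩ hd
    refine prime_sq_not_dvd K k hk d (e3 K * a * b) hd ?_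
    rw [← htop, ha, hb]
    ring
  have hall := small_factor_hom P Q s t hs ht hle hPs hQt hcop (by
    intro m hm hm'
    rw [← hPQ]
    exact hgap m (by omega) (by omega))
  have hQeq : Q = homogeneousComponent t Q := by
    conv_lhs => rw [← sum_homogeneousComponent Q]
    rw [Finset.sum_eq_single t]
    · intro b hb hbt
      rw [ht, Finset.mem_range] at hb
      have := (hall (t - b) (by omega) (by omega)).2
      rwa [show t - (t - b) = b by omega] at this
    · intro hh
      rw [ht] at hh
      simp at hh
  have hQhom : Q.IsHomogeneous t := by
    rw [hQeq]
    exact homogeneousComponent_isHomogeneous t Q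
  -- Q divides φj
  have hdvd : Q ∣ φj := by
    have h1 : Q ∣ homogeneousComponent (j - 3) Φ := by
      rw [hPQ]
      exact hom_dvd_hc hQhom P _
    have h2 := e3_hc f Φ h (j - 3)
    rw [show 3 + (j - 3) = j by omega, ← hφj, mul_left_comm] at h2
    rw [mul_left_cancel₀ (e3_ne K) h2] at h1
    have hu : IsUnit (C (f.coeff j) : MvPolynomial (Fin 3) K) :=
      (isUnit_iff_ne_zero.2 haj).map C
    exact (hu.dvd_mul_left).1 h1
  by_contra hQu
  have hφQ : φj ∣ Q := by
    obtain ⟨c, hc⟩ := hdvd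
    rcases hirr.isUnit_or_isUnit hc with h' | h'
    · exact absurd h' hQu
    · rw [hc]
      exact (h'.mul_right_dvd).2 dvd_rfl
  have hdeg1 : φj.totalDegree ≤ 1 := by
    apply gold_linear K k hk φj hirr.prime
    rw [← htop, ← hQeq]
    exact (hφQ.mul_left _).mul_left _
  have hne : powSum K j ≠ 0 := by
    rw [← hφj]
    exact mul_ne_zero (e3_ne K) hirr.ne_zero
  have hj : j = 3 + φj.totalDegree := by
    rw [← (powSum_hom K j).totalDegree hne, ← hφj,
      totalDegree_mul_of_isDomain (e3_ne K) hirr.ne_zero, (e3_hom K).totalDegree (e3_ne K)]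
  have hj' : j = 3 ∨ j = 4 := by omega
  rcases hj' with rfl | rfl
  · have h0 : φj.totalDegree = 0 := by omega
    rw [totalDegree_eq_zero_iff_eq_C] at h0
    apply hirr.not_isUnit
    have hc : coeff 0 φj ≠ 0 := by
      intro hc
      rw [hc, C_0] at h0
      exact hirr.ne_zero h0
    rw [h0]
    exact (isUnit_iff_ne_zero.2 hc).map C
  · apply hne
    have h2 : (2 : MvPolynomial (Fin 3) K) = 0 := CharTwo.two_eq_zero
    have h4 : (X 0 + X 1 + X 2 : MvPolynomial (Fin 3) K) ^ 4 = X 0 ^ 4 + X 1 ^ 4 + X 2 ^ 4 := by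
      rw [show (4 : ℕ) = 2 ^ 2 from rfl, add_pow_char_pow, add_pow_char_pow]
    rw [powSum, h4]
    linear_combination (X 0 ^ 4 + X 1 ^ 4 + X 2 ^ 4) * h2

lemma mainK {k : ℕ} (hk : 2 ≤ k) {f : Polynomial K} {Φ : MvPolynomial (Fin 3) K}
    (h : e3 K * Φ = fsum f) (hlead : f.coeff (2 ^ k + 1) = 1)
    (hz : ∀ m, 2 ^ (k - 1) + 1 < m → m ≠ 2 ^ k + 1 → f.coeff m = 0)
    {j : ℕ} (hj3 : 3 ≤ j) (haj : f.coeff j ≠ 0)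
    {φj : MvPolynomial (Fin 3) K} (hφj : e3 K * φj = powSum K j) (hirr : Irreducible φj) :
    Irreducible Φ := by
  rw [irreducible_iff]
  constructor
  · intro hu
    have h1 := (isUnit_iff_totalDegree_of_isReduced.1 hu).2
    rw [(phi_totalDegree hk h hlead hz).2.1] at h1
    have : 2 ^ 2 ≤ 2 ^ k := Nat.pow_le_pow_right (by norm_num) hk
    omega
  · intro P Q hPQ
    rcases le_total Q.totalDegree P.totalDegree with hle | hle
    · exact Or.inr (factor_case hk h hlead hz hj3 haj hφj hirr P Q hPQ hle)
    · exact Or.inl (factor_case hk h hlead hz hj3 haj hφj hirr Q P (by rw [hPQ, mul_comm]) hle)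

end mainK

lemma map_e3 {F K : Type*} [Field F] [Field K] (σ : F →+* K) :
    MvPolynomial.map σ (e3 F) = e3 K := by
  simp [e3]

lemma map_powSum {F K : Type*} [Field F] [Field K] (σ : F →+* K) (j : ℕ) :
    MvPolynomial.map σ (powSum F j) = powSum K j := by
  simp [powSum]

lemma map_fsum {F K : Type*} [Field F] [Field K] (σ : F →+* K) (f : Polynomial F) :
    MvPolynomial.map σ (fsum f) = fsum (f.map σ) := by
  rw [fsum_eq, fsum_eq, map_sum, Polynomial.natDegree_map]
  simp [map_powSum]

theorem gold_degree_first_case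
    (n k : ℕ) (hn : 0 < n) (hk : 2 ≤ k) (F : Type*) [Field F] [Fintype F]
    (hF : Fintype.card F = 2 ^ n)
    (g : Polynomial F) (hgdeg : g.natDegree ≤ 2 ^ (k - 1) + 1)
    (f : Polynomial F) (hf : f = Polynomial.X ^ (2 ^ k + 1) + g)
    (j : ℕ) (hj3 : 3 ≤ j) (hjle : j ≤ 2 ^ (k - 1) + 1) (haj : g.coeff j ≠ 0)
    (φj : MvPolynomial (Fin 3) F) (hφj : e3 F * φj = powSum F j)
    (hφjirr : Irreducible
      (MvPolynomial.map (algebraMap F (AlgebraicClosure F)) φj))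
    (φ : MvPolynomial (Fin 3) F) (hφ : e3 F * φ = fsum f) :
    Irreducible (MvPolynomial.map (algebraMap F (AlgebraicClosure F)) φ) := by
  have hchar : CharP F 2 := by
    have : Fact (Nat.Prime 2) := ⟨Nat.prime_two⟩
    exact charP_of_card_eq_prime_pow hF
  have hcharK : CharP (AlgebraicClosure F) 2 :=
    charP_of_injective_algebraMap (algebraMap F (AlgebraicClosure F)).injective 2
  have hlt : 2 ^ (k - 1) < 2 ^ k := Nat.pow_lt_pow_right (by norm_num) (by omega)
  refine mainK (f := f.map (algebraMap F (AlgebraicClosure F))) hk ?_ ?_ ?_ hj3 ?_ (j := j)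
    (φj := MvPolynomial.map (algebraMap F (AlgebraicClosure F)) φj) ?_ hφjirr
  · rw [← map_fsum, ← hφ, map_mul, map_e3]
  · rw [Polynomial.coeff_map, hf, Polynomial.coeff_add, Polynomial.coeff_X_pow_self,
      Polynomial.coeff_eq_zero_of_natDegree_lt (by omega), add_zero, map_one]
  · intro m hm hm'
    rw [Polynomial.coeff_map, hf, Polynomial.coeff_add, Polynomial.coeff_X_pow, if_neg hm',
      Polynomial.coeff_eq_zero_of_natDegree_lt (by omega), add_zero, map_zero]
  · rw [Polynomial.coeff_map, hf, Polynomial.coeff_add, Polynomial.coeff_X_pow,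
      if_neg (by omega), zero_add]
    simpa using haj
  · rw [← map_powSum (algebraMap F (AlgebraicClosure F)), ← hφj, map_mul, map_e3]
end

section
/- Let q = 2^n, let k be odd with k ≥ 3 and gcd(k,n) = 1, and let f(x) = x^{2^k+1} + a x^{2^{k-1}+2} + a^2 x^3 with a ∈ F_q, a ≠ 0. Then either φ_f is irreducible over an algebraic closure of F_q, or φ_f = P·Q where P, Q ∈ F_q[x,y,z] are each absolutely irreducible. -/
open MvPolynomial

namespace Polynomial
lemma gold_core {K : Type*} [Field K] (m : ℕ) (hm : 0 < m) (h g : K[X]) (a : K) (ha : a ≠ 0)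
    (hdeg : h.natDegree = 2 * m) (hsep : h.Separable) (hcop : IsCoprime h g)
    (p q : K[X][X]) (hp : ∀ i, (p.coeff i).natDegree ≤ i) (hq : ∀ i, (q.coeff i).natDegree ≤ i)
    (hpq : p * q = C h * X ^ (2 * m) + C (C a * g) * X ^ m + C (C (a ^ 2))) :
    (p ≠ 0 ∧ q ≠ 0) ∧ p.natDegree + q.natDegree = 2 * m ∧ (p.natDegree = 0 ∨ q.natDegree = 0 ∨
      (p.natDegree = m ∧ q.natDegree = m ∧ ∃ r r' : K[X], r + r' = g ∧ r * r' = h)) := by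
  have h0 : h ≠ 0 := by rintro rfl; simp at hdeg; omega
  have hnd : (p * q).natDegree = 2 * m := by
    rw [hpq]
    apply Polynomial.natDegree_eq_of_le_of_coeff_ne_zero
    · compute_degree
      all_goals omega
    · have h1 : 2 * m ≠ m := by omega
      have h2 : 2 * m ≠ 0 := by omega
      simp only [coeff_add, coeff_C_mul, coeff_X_pow, coeff_C, h1, h2, if_false,
        mul_zero, add_zero, if_true, mul_one]
      exact h0
  have hpq0 : p * q ≠ 0 := by
    intro h'; rw [h'] at hnd; simp at hnd; omega
  have hp0 := left_ne_zero_of_mul hpq0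
  have hq0 := right_ne_zero_of_mul hpq0
  have hst : p.natDegree + q.natDegree = 2 * m := by
    rw [← hnd, natDegree_mul hp0 hq0]
  refine ⟨⟨hp0, hq0⟩, hst, ?_⟩
  have hrev : p.reverse * q.reverse = C h + C (C a * g) * X ^ m + C (C (a ^ 2)) * X ^ (2 * m) := by
    rw [← reverse_mul_of_domain, reverse, hnd, hpq]
    rw [reflect_add, reflect_add, reflect_C_mul_X_pow, reflect_C_mul_X_pow, reflect_C]
    rw [revAt_le (le_refl _), revAt_le (by omega)]
    have : 2 * m - m = m := by omega
    simp [this]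
  obtain ⟨s, hs⟩ : ∃ s, s = p.natDegree := ⟨_, rfl⟩
  obtain ⟨t, ht⟩ : ∃ t, t = q.natDegree := ⟨_, rfl⟩
  have key : ∀ (p : K[X][X]), (∀ i, (p.coeff i).natDegree ≤ i) →
      (∀ i, (p.reverse.coeff i).natDegree ≤ p.natDegree - i) ∧
      (∀ i, p.natDegree < i → p.reverse.coeff i = 0) := by
    intro p hp
    have h2 : ∀ i, p.natDegree < i → p.reverse.coeff i = 0 := fun i hi =>
      coeff_eq_zero_of_natDegree_lt (lt_of_le_of_lt (reverse_natDegree_le p) hi)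
    refine ⟨fun i => ?_, h2⟩
    by_cases hi : i ≤ p.natDegree
    · rw [coeff_reverse, revAt_le hi]; exact hp _
    · rw [h2 i (by omega)]; simp
  obtain ⟨hP, hP'⟩ := key p hp
  obtain ⟨hQ, hQ'⟩ := key q hq
  rw [← hs] at hst hP hP' ⊢
  rw [← ht] at hst hQ hQ' ⊢
  generalize p.reverse = P at *
  generalize q.reverse = Q at *
  have hc0 : P.coeff 0 * Q.coeff 0 = h := by
    have := congrArg (fun f => coeff f 0) hrev
    simpa [mul_coeff_zero, hm.ne, hm.ne'] using this
  have hPne : P.coeff 0 ≠ 0 := left_ne_zero_of_mul (hc0 ▸ h0)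
  have hQne : Q.coeff 0 ≠ 0 := right_ne_zero_of_mul (hc0 ▸ h0)
  have hds : (P.coeff 0).natDegree = s ∧ (Q.coeff 0).natDegree = t := by
    have h1 := hP 0
    have h2 := hQ 0
    have h3 := natDegree_mul hPne hQne
    rw [hc0, hdeg] at h3
    omega
  have hPQcop : IsCoprime (P.coeff 0) (Q.coeff 0) := Separable.isCoprime (hc0 ▸ hsep)
  have hvan : ∀ i, 0 < i → i < m → P.coeff i = 0 ∧ Q.coeff i = 0 := by
    intro i
    induction i using Nat.strong_induction_on with
    | _ i ih =>
      intro hi him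
      have e := congrArg (fun f => coeff f i) hrev
      have e2 : P.coeff 0 * Q.coeff i + P.coeff i * Q.coeff 0 = 0 := by
        have h1 : i ≠ m := by omega
        have h2 : i ≠ 2 * m := by omega
        simp only [coeff_add, coeff_C_mul, coeff_X_pow, coeff_C, h1, h2, hi.ne', if_false,
          mul_zero, add_zero] at e
        rw [← e, coeff_mul, Finset.Nat.sum_antidiagonal_eq_sum_range_succ_mk, Finset.sum_range_succ]
        obtain ⟨l, rfl⟩ : ∃ l, i = l + 1 := ⟨i - 1, by omega⟩
        rw [Finset.sum_range_succ']
        simp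
        apply Finset.sum_eq_zero
        intro x hx
        rw [Finset.mem_range] at hx
        rw [(ih (x + 1) (by omega) (by omega) (by omega)).1, zero_mul]
      have hdvd : P.coeff 0 ∣ P.coeff i := by
        apply hPQcop.dvd_of_dvd_mul_right
        exact ⟨- Q.coeff i, by linear_combination e2⟩
      have hPi : P.coeff i = 0 := by
        by_contra hne
        have h1 := natDegree_le_of_dvd hdvd hne
        have h2 := hP i
        rw [hds.1] at h1
        have hs0 : s = 0 := by omega
        exact hne (hP' i (by omega))
      refine ⟨hPi, ?_⟩
      rw [hPi] at e2
      simpa [hPne] using e2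
  have em : P.coeff 0 * Q.coeff m + P.coeff m * Q.coeff 0 = C a * g := by
    have e := congrArg (fun f => coeff f m) hrev
    have h2 : m ≠ 2 * m := by omega
    simp only [coeff_add, coeff_C_mul, coeff_X_pow, coeff_C, h2, hm.ne', if_false,
      mul_zero, add_zero, if_true, mul_one, zero_add] at e
    rw [← e, coeff_mul, Finset.Nat.sum_antidiagonal_eq_sum_range_succ_mk, Finset.sum_range_succ]
    obtain ⟨l, rfl⟩ : ∃ l, m = l + 1 := ⟨m - 1, by omega⟩
    rw [Finset.sum_range_succ']
    simp
    apply Finset.sum_eq_zero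
    intro x hx
    rw [Finset.mem_range] at hx
    rw [(hvan (x + 1) (by omega) (by omega)).1, zero_mul]
  have haU : IsUnit (C a) := isUnit_C.2 (isUnit_iff_ne_zero.2 ha)
  have hcop' : IsCoprime h (C a * g) := (isCoprime_mul_unit_left_right haU _ _).2 hcop
  rcases lt_trichotomy t m with htm | htm | htm
  · right; left
    rw [hQ' m htm, mul_zero, zero_add] at em
    have hu : IsUnit (Q.coeff 0) := hcop'.isUnit_of_dvd' ⟨P.coeff 0, by rw [← hc0, mul_comm]⟩
      ⟨P.coeff m, by rw [← em, mul_comm]⟩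
    rw [← hds.2]; exact natDegree_eq_zero_of_isUnit hu
  · right; right
    have hsm : s = m := by omega
    refine ⟨hsm, htm, ?_⟩
    have e2 : P.coeff m * Q.coeff m = C (a ^ 2) := by
      have e := congrArg (fun f => coeff f (2 * m)) hrev
      have h1 : 2 * m ≠ 0 := by omega
      have h2 : 2 * m ≠ m := by omega
      simp only [coeff_add, coeff_C_mul, coeff_X_pow, coeff_C, h1, h2, if_false,
        mul_zero, add_zero, if_true, mul_one, zero_add] at e
      rw [← e, coeff_mul, Finset.sum_eq_single (m, m)]
      · rintro ⟨i, j⟩ hij hne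
        rw [Finset.HasAntidiagonal.mem_antidiagonal] at hij
        simp only at hij
        rcases lt_trichotomy i m with h' | h' | h'
        · simp [hQ' j (by omega)]
        · exact absurd (by rw [h']; congr 1; omega) hne
        · simp [hP' i (by omega)]
      · intro hne; exact absurd (by simp; omega) hne
    have hai : C a * C a⁻¹ = (1 : K[X]) := by rw [← C_mul, mul_inv_cancel₀ ha, C_1]
    rw [C_pow] at e2
    refine ⟨C a⁻¹ * (P.coeff 0 * Q.coeff m), C a⁻¹ * (P.coeff m * Q.coeff 0), ?_, ?_⟩
    · linear_combination C a⁻¹ * em + g * hai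
    · linear_combination (C a⁻¹) ^ 2 * P.coeff 0 * Q.coeff 0 * e2 + (C a * C a⁻¹) ^ 2 * hc0 +
        h * (C a * C a⁻¹ + 1) * hai
  · left
    rw [hP' m (by omega), zero_mul, add_zero] at em
    have hu : IsUnit (P.coeff 0) := hcop'.isUnit_of_dvd' ⟨Q.coeff 0, by rw [← hc0]⟩
      ⟨Q.coeff m, by rw [← em]⟩
    rw [← hds.1]; exact natDegree_eq_zero_of_isUnit hu

/-- Univariate data: `s = t^2+t`, `w = t^(2^j)+t`. -/
lemma gold_dvd_w {K : Type*} [Field K] [CharP K 2] (j : ℕ) :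
    (Polynomial.X ^ 2 + Polynomial.X : Polynomial K) ∣ Polynomial.X ^ (2 ^ j) + Polynomial.X := by
  induction j with
  | zero => simp [CharTwo.add_self_eq_zero]
  | succ j ih =>
    have : (Polynomial.X ^ (2 ^ (j+1)) + Polynomial.X : Polynomial K) =
      (Polynomial.X ^ (2 ^ j) + Polynomial.X) ^ 2 + (Polynomial.X ^ 2 + Polynomial.X) := by
      rw [CharTwo.add_sq]
      have := CharTwo.add_self_eq_zero (Polynomial.X ^ 2 : Polynomial K)
      linear_combination -this
    rw [this]
    exact dvd_add (dvd_pow ih two_ne_zero) dvd_rfl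

lemma gold_cop_w {K : Type*} [Field K] [CharP K 2] (l : ℕ) :
    IsCoprime (X ^ 2 + X + 1 : K[X]) (X ^ (2 ^ (2 * l + 1)) + X) := by
  induction l with
  | zero => exact ⟨1, -1, by simp; ring⟩
  | succ l ih =>
    have h2 : (2 : K[X]) = 0 := CharTwo.two_eq_zero
    have : (X ^ (2 ^ (2 * (l + 1) + 1)) + X : K[X]) =
      (X ^ (2 ^ (2 * l + 1)) + X) ^ 4 + (X ^ 2 + X + 1) * (X ^ 2 + X) := by
      have e : (X ^ (2 ^ (2 * l + 1)) + X : K[X]) ^ 4 = (X ^ (2 ^ (2 * l + 1))) ^ 4 + X ^ 4 := by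
        generalize (X ^ (2 ^ (2 * l + 1)) : K[X]) = W
        linear_combination (2 * W ^ 3 * X + 3 * W ^ 2 * X ^ 2 + 2 * W * X ^ 3) * h2
      rw [e, ← pow_mul]
      have : 2 ^ (2 * (l + 1) + 1) = 2 ^ (2 * l + 1) * 4 := by ring
      rw [this]
      linear_combination -(X ^ 4 + X ^ 3 + X ^ 2) * h2
    rw [this]
    exact (ih.pow_right (n := 4)).add_mul_left_right _

lemma gold_data {K : Type*} [Field K] [CharP K 2] (l : ℕ) :
    ∃ h g : K[X], (X ^ 2 + X) * h = X ^ (2 ^ (2 * l + 3)) + X ∧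
      (X ^ 2 + X) * g = X ^ (2 ^ (2 * l + 2)) + X ^ 2 ∧
      h.natDegree = 2 * (2 ^ (2 * l + 2) - 1) ∧ h.Separable ∧ IsCoprime h g ∧
      ((∃ r r' : K[X], r + r' = g ∧ r * r' = h) → l = 0) := by
  have h2 : (2 : K[X]) = 0 := CharTwo.two_eq_zero
  obtain ⟨v, hv⟩ := gold_dvd_w (K := K) (2 * l + 1)
  have hcw := gold_cop_w (K := K) l
  have hsd : (X ^ 2 + X : K[X]).natDegree = 2 := by compute_degree!
  have hs0 : (X ^ 2 + X : K[X]) ≠ 0 := by intro h; rw [h] at hsd; simp at hsd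
  obtain ⟨W, hW⟩ : ∃ W : K[X], W = X ^ (2 ^ (2 * l + 1)) := ⟨_, rfl⟩
  have hW2 : (X ^ (2 ^ (2 * l + 2)) : K[X]) = W ^ 2 := by rw [hW, ← pow_mul]; congr 1
  have hW4 : (X ^ (2 ^ (2 * l + 3)) : K[X]) = W ^ 4 := by rw [hW, ← pow_mul]; congr 1; ring
  obtain ⟨g, hg⟩ : ∃ g : K[X], g = (X ^ 2 + X) * v ^ 2 := ⟨_, rfl⟩
  obtain ⟨h, hh⟩ : ∃ h : K[X], h = g * (g * (X ^ 2 + X)) + (X ^ 2 + X + 1) := ⟨_, rfl⟩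
  rw [← hW] at hv hcw
  have hgs : (X ^ 2 + X) * g = (W + X) ^ 2 := by rw [hv, hg]; ring
  have hgs' : (X ^ 2 + X) * g = X ^ (2 ^ (2 * l + 2)) + X ^ 2 := by
    rw [hgs, hW2]; linear_combination (W * X) * h2
  have hhs : (X ^ 2 + X) * h = X ^ (2 ^ (2 * l + 3)) + X := by
    rw [hW4, hh]
    have : (X ^ 2 + X) * (g * (g * (X ^ 2 + X)) + (X ^ 2 + X + 1)) =
      ((X ^ 2 + X) * g) ^ 2 + (X ^ 2 + X) * (X ^ 2 + X + 1) := by ring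
    rw [this, hgs]
    linear_combination (2 * W ^ 3 * X + 3 * W ^ 2 * X ^ 2 + 2 * W * X ^ 3 + X ^ 4 + X ^ 3 + X ^ 2) * h2
  have hdeg : h.natDegree = 2 * (2 ^ (2 * l + 2) - 1) := by
    have h1 : h ≠ 0 := by
      rintro rfl
      rw [mul_zero] at hhs
      have := congrArg (fun f => coeff f 1) hhs
      have hne : 1 ≠ 2 ^ (2 * l + 3) := (Nat.one_lt_two_pow (by omega)).ne
      simp [coeff_X_pow, hne] at this
    have e := natDegree_mul hs0 h1
    have hlt : 1 < 2 ^ (2 * l + 3) := Nat.one_lt_two_pow (by omega)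
    have e2 : (X ^ (2 ^ (2 * l + 3)) + X : K[X]).natDegree = 2 ^ (2 * l + 3) := by
      rw [natDegree_add_eq_left_of_natDegree_lt] <;> simp [hlt]
    rw [hhs, hsd, e2] at e
    have : 2 ^ (2 * l + 3) = 2 * 2 ^ (2 * l + 2) := by ring
    omega
  have ds : derivative (X ^ 2 + X : K[X]) = 1 := by
    simp [CharTwo.add_self_eq_zero]
  have dh : h + (X ^ 2 + X) * derivative h = 1 := by
    have := congrArg derivative hhs
    rw [derivative_mul, ds] at this
    have h3 : (2 : K[X]) ^ (2 * l + 3) = 0 := by rw [h2]; simp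
    simpa [h3, derivative_X_pow, CharTwo.two_eq_zero] using this
  have dg : g + (X ^ 2 + X) * derivative g = 0 := by
    have := congrArg derivative hgs
    rw [derivative_mul, ds, derivative_sq] at this
    simpa [CharTwo.two_eq_zero] using this
  refine ⟨h, g, hhs, hgs', hdeg, ⟨1, X ^ 2 + X, by linear_combination dh⟩, ?_, ?_⟩
  · have h3 : IsCoprime (X ^ 2 + X + 1 : K[X]) ((X ^ 2 + X) * g) := by
      rw [hgs]; exact hcw.pow_right
    have h4 := h3.of_mul_right_right
    rw [hh]
    have := h4.symm.add_mul_left_right (g * (X ^ 2 + X))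
    rw [add_comm] at this
    exact this.symm
  · rintro ⟨r, r', e1, e2⟩
    have e3 : r ^ 2 + g * r = h := by
      rw [← e1, ← e2]; linear_combination r ^ 2 * h2
    have e4 := congrArg derivative e3
    rw [derivative_add, derivative_sq, derivative_mul] at e4
    have e5 : g ∣ X ^ 2 + X := by
      refine ⟨r + (X ^ 2 + X) * derivative r + g * (X ^ 2 + X), ?_⟩
      have h3 : (C 2 : K[X]) = 2 := rfl
      rw [h3] at e4
      linear_combination (X ^ 2 + X) * e4 + dh - hh - r * dg -
        ((X ^ 2 + X) * r * derivative r + (X ^ 2 + X) * g * derivative r + g ^ 2 * (X ^ 2 + X)) * h2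
    have h6 := natDegree_le_of_dvd e5 hs0
    have hg0 : g ≠ 0 := by rintro rfl; simp at e5; exact hs0 e5
    have h7 := natDegree_mul hs0 hg0
    rw [hgs', hsd] at h7
    rcases Nat.eq_zero_or_pos l with hl | hl
    · exact hl
    have hlt : 2 ^ 4 ≤ 2 ^ (2 * l + 2) := Nat.pow_le_pow_right (by norm_num) (by omega)
    rw [natDegree_add_eq_left_of_natDegree_lt, natDegree_X_pow] at h7
    · omega
    · simp; omega
end Polynomial
namespace Polynomial

/-- The specialisation `x ↦ 0, y ↦ tT, z ↦ T`. -/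
noncomputable def goldSpec (K : Type*) [Field K] : MvPolynomial (Fin 3) K →ₐ[K] K[X][X] :=
  MvPolynomial.aeval ![0, C X * X, X]

lemma goldSpec_coeff {K : Type*} [Field K] (P : MvPolynomial (Fin 3) K) :
    ∀ i, ((goldSpec K P).coeff i).natDegree ≤ i := by
  induction P using MvPolynomial.induction_on with
  | C c =>
    intro i
    rw [goldSpec, MvPolynomial.aeval_C, IsScalarTower.algebraMap_apply K K[X] K[X][X]]
    simp only [algebraMap_eq, coeff_C]
    split_ifs <;> simp
  | add p q hp hq =>
    intro i
    rw [map_add, coeff_add]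
    exact natDegree_add_le_of_degree_le (hp i) (hq i)
  | mul_X p n hp =>
    intro i
    rw [map_mul, coeff_mul]
    apply natDegree_sum_le_of_forall_le
    rintro ⟨u, v⟩ huv
    rw [Finset.HasAntidiagonal.mem_antidiagonal] at huv
    simp only at huv
    refine natDegree_mul_le.trans ?_
    have h1 : ((goldSpec K (MvPolynomial.X n)).coeff v).natDegree ≤ v := by
      rw [goldSpec, MvPolynomial.aeval_X]
      fin_cases n
      · simp
      · simp only [Fin.mk_one, Matrix.cons_val_one, Matrix.cons_val_zero, coeff_C_mul, coeff_X]
        split_ifs with h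
        · simp [← h]
        · simp
      · simp [coeff_X]
        split_ifs <;> simp
    have := hp u
    simp only
    omega

lemma goldSpec_natDegree_le {K : Type*} [Field K] (P : MvPolynomial (Fin 3) K) :
    (goldSpec K P).natDegree ≤ P.totalDegree := by
  rw [goldSpec, MvPolynomial.aeval_def, MvPolynomial.eval₂_eq']
  apply natDegree_sum_le_of_forall_le
  intro d hd
  refine le_trans ?_ (MvPolynomial.le_totalDegree hd)
  rw [IsScalarTower.algebraMap_apply K K[X] K[X][X]]
  refine (natDegree_C_mul_le _ _).trans ?_
  refine (natDegree_prod_le _ _).trans ?_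
  rw [Finsupp.sum_fintype _ _ (by simp)]
  apply Finset.sum_le_sum
  intro i _
  refine natDegree_pow_le.trans ?_
  have : (![0, C X * X, X] i : K[X][X]).natDegree ≤ 1 := by
    fin_cases i
    · simp
    · simp
    · simp
  nlinarith

lemma gold_spec_phi {K : Type*} [Field K] [CharP K 2] (l : ℕ) (a : K) (h g : K[X])
    (hh : (X ^ 2 + X) * h = X ^ (2 ^ (2 * l + 3)) + X)
    (hg : (X ^ 2 + X) * g = X ^ (2 ^ (2 * l + 2)) + X ^ 2)
    (φ : MvPolynomial (Fin 3) K)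
    (hφ : e3 K * φ = fsum (X ^ (2 ^ (2 * l + 3) + 1) + C a * X ^ (2 ^ (2 * l + 2) + 2) +
      C (a ^ 2) * X ^ 3)) :
    goldSpec K φ = C h * X ^ (2 * (2 ^ (2 * l + 2) - 1)) +
      C (C a * g) * X ^ (2 ^ (2 * l + 2) - 1) + C (C (a ^ 2)) := by
  have h2 : (2 : K[X][X]) = 0 := CharTwo.two_eq_zero
  have e := congrArg (goldSpec K) hφ
  have x0 : goldSpec K (MvPolynomial.X 0) = 0 := by simp [goldSpec]
  have x1 : goldSpec K (MvPolynomial.X 1) = C X * X := by simp [goldSpec]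
  have x2 : goldSpec K (MvPolynomial.X 2) = X := by simp [goldSpec]
  have ea : algebraMap K K[X][X] a = C (C a) := rfl
  simp only [e3, fsum, map_mul, map_add, map_pow, aeval_X, aeval_C, x0, x1, x2,
    AlgHom.commutes, ea] at e
  obtain ⟨m, hm⟩ : ∃ m, m + 1 = 2 ^ (2 * l + 2) := ⟨2 ^ (2 * l + 2) - 1, by
    have := Nat.one_le_two_pow (n := 2 * l + 2); omega⟩
  have hm2 : 2 ^ (2 * l + 3) = 2 * m + 2 := by rw [pow_succ]; omega
  have hh' := congrArg C hh
  have hg' := congrArg C hg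
  simp only [map_mul, map_add, map_pow] at hh' hg'
  have f1 : (C X * X + X : K[X][X]) ^ (2 ^ (2 * l + 3) + 1) =
      ((C X * X) ^ (2 ^ (2 * l + 3)) + X ^ (2 ^ (2 * l + 3))) * (C X * X + X) := by
    rw [pow_succ, add_pow_char_pow]
  have f2 : (C X * X + X : K[X][X]) ^ (2 ^ (2 * l + 2) + 2) =
      ((C X * X) ^ (2 ^ (2 * l + 2)) + X ^ (2 ^ (2 * l + 2))) * (C X * X + X) ^ 2 := by
    rw [pow_add, add_pow_char_pow]
  have hne : (C X * X * X * (C X * X + X) : K[X][X]) ≠ 0 := by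
    have : (C X * X * X * (C X * X + X) : K[X][X]) = C (X ^ 2 + X) * X ^ 3 := by
      simp only [map_add, map_pow]; ring
    rw [this]
    refine mul_ne_zero ?_ (pow_ne_zero _ X_ne_zero)
    rw [C_ne_zero]
    intro h
    have := congrArg (fun f => coeff f 1) h
    simp [coeff_X_pow] at this
  have hm1 : 2 ^ (2 * l + 2) - 1 = m := by omega
  rw [hm1]
  rw [hm2] at hh' f1 e
  rw [← hm] at hg' f2 e
  apply mul_left_cancel₀ hne
  simp only [zero_add, f1, f2, zero_pow (Nat.succ_ne_zero _)] at e
  simp only [map_mul, map_pow]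
  generalize goldSpec K φ = Φ at *
  generalize (C X : K[X][X]) = t at *
  generalize (C (C a) : K[X][X]) = b at *
  generalize (C h : K[X][X]) = h at *
  generalize (C g : K[X][X]) = g at *
  generalize (X : K[X][X]) = T at *
  linear_combination e - T ^ (2 * m + 3) * hh' - b * T ^ (m + 3) * hg' +
    ((t * T) ^ (2 * m + 2) * t * T + T ^ (2 * m + 2) * T +
      b * ((t * T) ^ (m + 1) * t ^ 2 * T ^ 2 + T ^ (m + 1) * T ^ 2 + (t * T) ^ (m + 1) * t * T ^ 2 +
        T ^ (m + 1) * t * T ^ 2) + b ^ 2 * (t ^ 3 + t ^ 2 + t + 1) * T ^ 3) * h2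

lemma gold_totalDegree {K : Type*} [Field K] (l : ℕ) (a : K)
    (φ : MvPolynomial (Fin 3) K) (h0 : φ ≠ 0)
    (hφ : e3 K * φ = fsum (X ^ (2 ^ (2 * l + 3) + 1) + C a * X ^ (2 ^ (2 * l + 2) + 2) +
      C (a ^ 2) * X ^ 3)) : φ.totalDegree ≤ 2 * (2 ^ (2 * l + 2) - 1) := by
  have x0 : goldSpec K (MvPolynomial.X 0) = 0 := by simp [goldSpec]
  have x1 : goldSpec K (MvPolynomial.X 1) = C X * X := by simp [goldSpec]
  have x2 : goldSpec K (MvPolynomial.X 2) = X := by simp [goldSpec]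
  have s0 : (X ^ 2 + X : K[X]) ≠ 0 := by
    intro h
    have := congrArg (fun f => coeff f 1) h
    simp [coeff_X_pow] at this
  have h1 : goldSpec K (e3 K) = C (X ^ 2 + X) * X ^ 3 := by
    simp only [e3, map_mul, map_add, map_pow, x0, x1, x2]; ring
  have h2 : 3 ≤ (e3 K).totalDegree := by
    refine le_trans ?_ (goldSpec_natDegree_le (e3 K))
    rw [h1, natDegree_C_mul_X_pow _ _ s0]
  have h3 : e3 K ≠ 0 := by
    intro h; rw [h] at h2; simp at h2
  have hN : 2 ^ (2 * l + 3) = 2 * 2 ^ (2 * l + 2) := by ring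
  have hM : 2 ^ 2 ≤ 2 ^ (2 * l + 2) := Nat.pow_le_pow_right (by norm_num) (by omega)
  have key : ∀ u : MvPolynomial (Fin 3) K, u.totalDegree ≤ 1 →
      (aeval u (X ^ (2 ^ (2 * l + 3) + 1) + C a * X ^ (2 ^ (2 * l + 2) + 2) +
        C (a ^ 2) * X ^ 3 : K[X])).totalDegree ≤ 2 ^ (2 * l + 3) + 1 := by
    intro u hu
    have hp : ∀ (i : ℕ), i ≤ 2 ^ (2 * l + 3) + 1 →
        (u ^ i).totalDegree ≤ 2 ^ (2 * l + 3) + 1 := by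
      intro i hi
      refine (MvPolynomial.totalDegree_pow _ _).trans ?_
      nlinarith
    have hc : ∀ (c : K) (i : ℕ), i ≤ 2 ^ (2 * l + 3) + 1 →
        (MvPolynomial.C c * u ^ i).totalDegree ≤ 2 ^ (2 * l + 3) + 1 := by
      intro c i hi
      refine (MvPolynomial.totalDegree_mul _ _).trans ?_
      rw [MvPolynomial.totalDegree_C, zero_add]
      exact hp i hi
    simp only [map_add, map_mul, aeval_X_pow, aeval_C, MvPolynomial.algebraMap_eq]
    refine (MvPolynomial.totalDegree_add _ _).trans (max_le ?_ (hc _ _ (by omega)))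
    exact (MvPolynomial.totalDegree_add _ _).trans (max_le (hp _ le_rfl) (hc _ _ (by omega)))
  have hX : ∀ i : Fin 3, (MvPolynomial.X i : MvPolynomial (Fin 3) K).totalDegree ≤ 1 :=
    fun i => by simp
  have h4 := congrArg MvPolynomial.totalDegree hφ
  rw [MvPolynomial.totalDegree_mul_of_isDomain h3 h0] at h4
  have h5 : (fsum (X ^ (2 ^ (2 * l + 3) + 1) + C a * X ^ (2 ^ (2 * l + 2) + 2) +
      C (a ^ 2) * X ^ 3)).totalDegree ≤ 2 ^ (2 * l + 3) + 1 := by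
    rw [fsum]
    refine (MvPolynomial.totalDegree_add _ _).trans (max_le ?_ (key _ ?_))
    · refine (MvPolynomial.totalDegree_add _ _).trans (max_le ?_ (key _ (hX _)))
      exact (MvPolynomial.totalDegree_add _ _).trans (max_le (key _ (hX _)) (key _ (hX _)))
    · refine (MvPolynomial.totalDegree_add _ _).trans (max_le ?_ (hX _))
      exact (MvPolynomial.totalDegree_add _ _).trans (max_le (hX _) (hX _))
  omega

/-- Factorisation dichotomy for `φ` over a field of characteristic two. -/
lemma gold_factor {K : Type*} [Field K] [CharP K 2] (l : ℕ) (a : K) (ha : a ≠ 0)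
    (φ : MvPolynomial (Fin 3) K)
    (hφ : e3 K * φ = fsum (X ^ (2 ^ (2 * l + 3) + 1) + C a * X ^ (2 ^ (2 * l + 2) + 2) +
      C (a ^ 2) * X ^ 3)) (P Q : MvPolynomial (Fin 3) K) (hPQ : φ = P * Q) :
    P ≠ 0 ∧ Q ≠ 0 ∧ P.totalDegree + Q.totalDegree = 2 * (2 ^ (2 * l + 2) - 1) ∧
    (P.totalDegree = 0 ∨ Q.totalDegree = 0 ∨
      (P.totalDegree = 2 ^ (2 * l + 2) - 1 ∧ Q.totalDegree = 2 ^ (2 * l + 2) - 1 ∧ l = 0)) := by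
  obtain ⟨h, g, hh, hg, hdeg, hsep, hcop, hl⟩ := gold_data (K := K) l
  have hM : 2 ^ 2 ≤ 2 ^ (2 * l + 2) := Nat.pow_le_pow_right (by norm_num) (by omega)
  have e := gold_spec_phi l a h g hh hg φ hφ
  rw [hPQ, map_mul] at e
  obtain ⟨⟨hp0, hq0⟩, h1, h2⟩ := gold_core _ (by omega) h g a ha hdeg hsep hcop _ _ (goldSpec_coeff P)
    (goldSpec_coeff Q) e
  have hP : P ≠ 0 := by rintro rfl; simp at hp0
  have hQ : Q ≠ 0 := by rintro rfl; simp at hq0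
  have h3 := gold_totalDegree l a φ (hPQ ▸ mul_ne_zero hP hQ) hφ
  rw [hPQ, MvPolynomial.totalDegree_mul_of_isDomain hP hQ] at h3
  have h4 := goldSpec_natDegree_le P
  have h5 := goldSpec_natDegree_le Q
  refine ⟨hP, hQ, by omega, ?_⟩
  rcases h2 with h2 | h2 | ⟨h2, h2', h2''⟩
  · left; omega
  · right; left; omega
  · right; right; exact ⟨by omega, by omega, hl h2''⟩

lemma gold_isUnit {K : Type*} [Field K] (P : MvPolynomial (Fin 3) K) (h0 : P ≠ 0)
    (h : P.totalDegree = 0) : IsUnit P := by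
  rw [MvPolynomial.totalDegree_eq_zero_iff_eq_C] at h
  rw [h] at h0 ⊢
  refine IsUnit.map MvPolynomial.C (isUnit_iff_ne_zero.2 ?_)
  intro h'; rw [h'] at h0; simp at h0

lemma gold_not_isUnit {K : Type*} [Field K] (P : MvPolynomial (Fin 3) K)
    (h : P.totalDegree ≠ 0) : ¬ IsUnit P := by
  intro hu
  obtain ⟨Q, hQ⟩ := hu.exists_right_inv
  have hP0 : P ≠ 0 := hu.ne_zero
  have hQ0 : Q ≠ 0 := by rintro rfl; simp at hQ
  have := MvPolynomial.totalDegree_mul_of_isDomain hP0 hQ0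
  rw [hQ] at this
  simp at this
  omega

lemma gold_irred {K : Type*} [Field K] [CharP K 2] (l : ℕ) (hl : l ≠ 0) (a : K) (ha : a ≠ 0)
    (φ : MvPolynomial (Fin 3) K)
    (hφ : e3 K * φ = fsum (X ^ (2 ^ (2 * l + 3) + 1) + C a * X ^ (2 ^ (2 * l + 2) + 2) +
      C (a ^ 2) * X ^ 3)) : Irreducible φ := by
  have hM : 2 ^ 2 ≤ 2 ^ (2 * l + 2) := Nat.pow_le_pow_right (by norm_num) (by omega)
  refine ⟨?_, ?_⟩
  · apply gold_not_isUnit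
    have := gold_factor l a ha φ hφ φ 1 (by simp)
    simp at this
    omega
  · intro P Q hPQ
    obtain ⟨hP, hQ, -, h | h | h⟩ := gold_factor l a ha φ hφ P Q hPQ
    · exact Or.inl (gold_isUnit P hP h)
    · exact Or.inr (gold_isUnit Q hQ h)
    · exact absurd h.2.2 hl

lemma gold_irred_factor {K : Type*} [Field K] [CharP K 2] (a : K) (ha : a ≠ 0)
    (φ : MvPolynomial (Fin 3) K)
    (hφ : e3 K * φ = fsum (X ^ (2 ^ (2 * 0 + 3) + 1) + C a * X ^ (2 ^ (2 * 0 + 2) + 2) +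
      C (a ^ 2) * X ^ 3)) (P Q : MvPolynomial (Fin 3) K) (hPQ : φ = P * Q)
    (h1 : P.totalDegree = 3) : Irreducible P := by
  refine ⟨gold_not_isUnit P (by omega), ?_⟩
  intro R S hRS
  have hP0 := (gold_factor 0 a ha φ hφ P Q hPQ).1
  have hR0 : R ≠ 0 := by rintro rfl; simp at hRS; exact hP0 hRS
  have hS0 : S ≠ 0 := by rintro rfl; simp at hRS; exact hP0 hRS
  have hd := MvPolynomial.totalDegree_mul_of_isDomain hR0 hS0
  rw [← hRS, h1] at hd
  obtain ⟨-, -, -, h⟩ := gold_factor 0 a ha φ hφ R (S * Q) (by rw [hPQ, hRS, mul_assoc])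
  have h5 := (gold_factor 0 a ha φ hφ R (S * Q) (by rw [hPQ, hRS, mul_assoc])).2.2.1
  norm_num at h h5
  rcases h with h | h | h
  · exact Or.inl (gold_isUnit R hR0 h)
  · exfalso; omega
  · exact Or.inr (gold_isUnit S hS0 (by omega))

/-- The explicit factorisation for `k = 3`. -/
lemma gold_three {R : Type*} [CommRing R] [CharP R 2] (x y z b : R) :
    (x + y) * (x + z) * (y + z) *
      (((x + y) ^ 3 + (x + y) * (x + z) ^ 2 + (x + z) ^ 3 + b) *
        ((x + y) ^ 3 + (x + y) ^ 2 * (x + z) + (x + z) ^ 3 + b)) =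
    (x ^ 9 + b * x ^ 6 + b ^ 2 * x ^ 3) + (y ^ 9 + b * y ^ 6 + b ^ 2 * y ^ 3) +
      (z ^ 9 + b * z ^ 6 + b ^ 2 * z ^ 3) +
      ((x + y + z) ^ 9 + b * (x + y + z) ^ 6 + b ^ 2 * (x + y + z) ^ 3) := by
  have h2 : (2 : R) = 0 := CharTwo.two_eq_zero
  grind
end Polynomial

theorem gold_degree_boundary_case_special
    (n k : ℕ) (hn : 0 < n) (hk3 : 3 ≤ k) (hkodd : Odd k) (hgcd : Nat.gcd k n = 1)
    (F : Type*) [Field F] [Fintype F] (hF : Fintype.card F = 2 ^ n)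
    (a : F) (ha : a ≠ 0)
    (f : Polynomial F)
    (hf : f = Polynomial.X ^ (2 ^ k + 1) +
      Polynomial.C a * Polynomial.X ^ (2 ^ (k - 1) + 2) +
      Polynomial.C (a ^ 2) * Polynomial.X ^ 3)
    (φ : MvPolynomial (Fin 3) F) (hφ : e3 F * φ = fsum f) :
    Irreducible (MvPolynomial.map (algebraMap F (AlgebraicClosure F)) φ) ∨
      ∃ P Q : MvPolynomial (Fin 3) F, φ = P * Q ∧
        Irreducible (MvPolynomial.map (algebraMap F (AlgebraicClosure F)) P) ∧
        Irreducible (MvPolynomial.map (algebraMap F (AlgebraicClosure F)) Q) := by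
  have : CharP F 2 := charP_of_card_eq_prime_pow hF
  have : CharP (AlgebraicClosure F) 2 := charP_of_injective_algebraMap
    (algebraMap F (AlgebraicClosure F)).injective 2
  obtain ⟨l, rfl⟩ : ∃ l, k = 2 * l + 3 := by
    obtain ⟨j, hj⟩ := hkodd
    exact ⟨j - 1, by omega⟩
  have hsub : 2 * l + 3 - 1 = 2 * l + 2 := by omega
  rw [hsub] at hf
  subst hf
  obtain ⟨σ, hσ⟩ : ∃ σ, σ = algebraMap F (AlgebraicClosure F) := ⟨_, rfl⟩
  rw [← hσ]
  have hb : σ a ≠ 0 := by simpa using ha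
  have hφ' : e3 (AlgebraicClosure F) * MvPolynomial.map σ φ =
      fsum (Polynomial.X ^ (2 ^ (2 * l + 3) + 1) +
        Polynomial.C (σ a) * Polynomial.X ^ (2 ^ (2 * l + 2) + 2) +
        Polynomial.C ((σ a) ^ 2) * Polynomial.X ^ 3) := by
    have := congrArg (MvPolynomial.map σ) hφ
    simpa [e3, fsum, MvPolynomial.algebraMap_eq] using this
  by_cases hl : l = 0
  · right
    subst hl
    have hfac : φ = ((X 0 + X 1) ^ 3 + (X 0 + X 1) * (X 0 + X 2) ^ 2 + (X 0 + X 2) ^ 3 + C a) *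
        ((X 0 + X 1) ^ 3 + (X 0 + X 1) ^ 2 * (X 0 + X 2) + (X 0 + X 2) ^ 3 + C a) := by
      have he : e3 F ≠ 0 := by
        intro h
        have h1 := congrArg (Polynomial.goldSpec F) h
        have h2 : Polynomial.goldSpec F (e3 F) =
            Polynomial.C (Polynomial.X ^ 2 + Polynomial.X) * Polynomial.X ^ 3 := by
          simp [e3, Polynomial.goldSpec]; ring
        rw [h2, map_zero] at h1
        have h3 := congrArg (fun f => (f.coeff 3).coeff 1) h1
        simp only [Polynomial.coeff_C_mul, Polynomial.coeff_X_pow, if_true, mul_one] at h3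
        simp [Polynomial.coeff_X_pow] at h3
      apply mul_left_cancel₀ he
      rw [hφ, e3, Polynomial.gold_three]
      simp [fsum, MvPolynomial.algebraMap_eq]
    have hfac' := congrArg (MvPolynomial.map σ) hfac
    rw [map_mul] at hfac'
    have hlin : ∀ i j : Fin 3, (X i + X j : MvPolynomial (Fin 3) F).totalDegree ≤ 1 := by
      intro i j
      exact (totalDegree_add _ _).trans (by simp)
    have hcub : ∀ (u v w : MvPolynomial (Fin 3) F), u.totalDegree ≤ 3 → v.totalDegree ≤ 3 →
        w.totalDegree ≤ 3 → (MvPolynomial.map σ (u + v + w + C a)).totalDegree ≤ 3 := by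
      intro u v w hu hv hw
      have h1 := totalDegree_add (u + v + w) (C a)
      have h2 := totalDegree_add (u + v) w
      have h3 := totalDegree_add u v
      have h4 : (MvPolynomial.map σ (u + v + w + C a)).totalDegree ≤
        (u + v + w + C a).totalDegree :=
        Finset.sup_mono (support_map_subset _ _)
      rw [totalDegree_C] at h1
      omega
    have p3 : ∀ i j : Fin 3, ((X i + X j : MvPolynomial (Fin 3) F) ^ 3).totalDegree ≤ 3 := by
      intro i j
      have := totalDegree_pow (X i + X j : MvPolynomial (Fin 3) F) 3
      have := hlin i j
      omega
    have p2 : ∀ i j : Fin 3, ((X i + X j : MvPolynomial (Fin 3) F) ^ 2).totalDegree ≤ 2 := by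
      intro i j
      have := totalDegree_pow (X i + X j : MvPolynomial (Fin 3) F) 2
      have := hlin i j
      omega
    refine ⟨_, _, hfac, ?_⟩
    have hP := hcub ((X 0 + X 1) ^ 3) ((X 0 + X 1) * (X 0 + X 2) ^ 2) ((X 0 + X 2) ^ 3)
      (p3 _ _) ((totalDegree_mul _ _).trans (by have := hlin 0 1; have := p2 0 2; omega)) (p3 _ _)
    have hQ := hcub ((X 0 + X 1) ^ 3) ((X 0 + X 1) ^ 2 * (X 0 + X 2)) ((X 0 + X 2) ^ 3)
      (p3 _ _) ((totalDegree_mul _ _).trans (by have := hlin 0 2; have := p2 0 1; omega)) (p3 _ _)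
    have hd := (Polynomial.gold_factor 0 (σ a) hb _ hφ' _ _ hfac').2.2.1
    norm_num only at hd
    constructor
    · exact Polynomial.gold_irred_factor (σ a) hb _ hφ' _ _ hfac' (by omega)
    · exact Polynomial.gold_irred_factor (σ a) hb _ hφ' _ _ (hfac'.trans (mul_comm _ _)) (by omega)
  · left
    exact Polynomial.gold_irred l hl (σ a) hb _ hφ'
end

section
/- Let q = 2^n and let F ∈ F_q[x,y,z,t] be homogeneous of positive degree with t not dividing F. Suppose there exists P ∈ F_q[x,y,z], irreducible over an algebraic closure of F_q, such that P divides F(x,y,z,0) but P^2 does not divide F(x,y,z,0). Then F has a factor G ∈ F_q[x,y,z,t] of positive degree that is absolutely irreducible. -/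
open MvPolynomial

/-- Substitution `x ↦ x, y ↦ y, z ↦ z, t ↦ 0` from `F[x,y,z,t]` to `F[x,y,z]`. -/
noncomputable def substT0 (F : Type*) [CommRing F] :
    Fin 4 → MvPolynomial (Fin 3) F := ![X 0, X 1, X 2, 0]

lemma descend_fixed {σ F K : Type*} [Field F] [Field K] [Algebra F K] [IsGalois F K]
    (H : MvPolynomial σ K)
    (h : ∀ s : K ≃ₐ[F] K, MvPolynomial.map (s : K →+* K) H = H) :
    ∃ G : MvPolynomial σ F, MvPolynomial.map (algebraMap F K) G = H := by
  have : H ∈ Set.range (MvPolynomial.map (σ := σ) (algebraMap F K)) := by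
    rw [mem_range_map_iff_coeffs_subset]
    intro c hc
    rw [InfiniteGalois.mem_range_algebraMap_iff_fixed]
    intro s
    obtain ⟨m, _, rfl⟩ := MvPolynomial.mem_coeffs_iff.1 hc
    have := congrArg (coeff m) (h s)
    rw [coeff_map] at this
    exact this
  exact this

lemma map_gal_map {σ F K : Type*} [Field F] [Field K] [Algebra F K]
    (s : K ≃ₐ[F] K) (A : MvPolynomial σ F) :
    MvPolynomial.map (s : K →+* K) (MvPolynomial.map (algebraMap F K) A) =
      MvPolynomial.map (algebraMap F K) A := by
  rw [MvPolynomial.map_map]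
  have h : (s : K →+* K).comp (algebraMap F K) = algebraMap F K :=
    RingHom.ext fun x => s.commutes x
  rw [h]

lemma descend_dvd {σ F K : Type*} [Field F] [Field K] [Algebra F K] [IsGalois F K]
    (A B : MvPolynomial σ F)
    (h : MvPolynomial.map (algebraMap F K) A ∣ MvPolynomial.map (algebraMap F K) B) :
    A ∣ B := by
  have inj := MvPolynomial.map_injective (σ := σ) (algebraMap F K) (algebraMap F K).injective
  obtain ⟨H, hH⟩ := h
  by_cases hA : A = 0
  · subst hA
    rw [map_zero, zero_mul] at hH
    have : B = 0 := inj (by rw [hH, map_zero])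
    rw [this]
  have hA' : MvPolynomial.map (algebraMap F K) A ≠ 0 := fun h0 => hA (inj (by rw [h0, map_zero]))
  obtain ⟨G, hG⟩ := descend_fixed (F := F) H (fun s => by
    have := congrArg (MvPolynomial.map (s : K →+* K)) hH
    rw [map_mul, map_gal_map, map_gal_map, hH] at this
    exact (mul_left_cancel₀ hA' this).symm)
  exact ⟨G, inj (by rw [hH, map_mul, hG])⟩

lemma map_substT0 {A B : Type*} [CommRing A] [CommRing B] (f : A →+* B)
    (Q : MvPolynomial (Fin 4) A) :
    MvPolynomial.map f (aeval (substT0 A) Q) = aeval (substT0 B) (MvPolynomial.map f Q) := by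
  induction Q using MvPolynomial.induction_on with
  | C a => simp [MvPolynomial.algebraMap_eq]
  | add p q hp hq => simp only [map_add, hp, hq]
  | mul_X p i hp =>
    simp only [map_mul, hp, aeval_X, map_X]
    congr 1
    fin_cases i <;> simp [substT0]

theorem abs_irred_factor_from_hyperplane_section
    (n : ℕ) (hn : 0 < n) (F : Type*) [Field F] [Fintype F]
    (hF : Fintype.card F = 2 ^ n)
    (Fp : MvPolynomial (Fin 4) F) (D : ℕ) (hD : 0 < D)
    (hhom : Fp.IsHomogeneous D) (ht : ¬ (X 3 : MvPolynomial (Fin 4) F) ∣ Fp)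
    (P : MvPolynomial (Fin 3) F)
    (hPirr : Irreducible (MvPolynomial.map (algebraMap F (AlgebraicClosure F)) P))
    (hPdvd : P ∣ MvPolynomial.aeval (substT0 F) Fp)
    (hP2ndvd : ¬ P ^ 2 ∣ MvPolynomial.aeval (substT0 F) Fp) :
    ∃ G : MvPolynomial (Fin 4) F, G ∣ Fp ∧ 0 < G.totalDegree ∧
      Irreducible (MvPolynomial.map (algebraMap F (AlgebraicClosure F)) G) := by
  set K := AlgebraicClosure F
  set PK := MvPolynomial.map (algebraMap F K) P with hPK
  set FK := MvPolynomial.map (algebraMap F K) Fp with hFK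
  have inj := MvPolynomial.map_injective (σ := Fin 4) (algebraMap F K) (algebraMap F K).injective
  have hFp0 : Fp ≠ 0 := by
    rintro rfl
    exact hP2ndvd (by simp)
  have hFK0 : FK ≠ 0 := fun h0 => hFp0 (inj (by rw [← hFK, h0, map_zero]))
  have hPp : Prime PK := hPirr.prime
  have hdvd : PK ∣ aeval (substT0 K) FK := by
    rw [hFK, ← map_substT0]
    exact map_dvd _ hPdvd
  have hndvd : ¬ PK ^ 2 ∣ aeval (substT0 K) FK := by
    rw [hFK, ← map_substT0, hPK, ← map_pow]
    exact fun h => hP2ndvd (descend_dvd _ _ h)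
  -- an irreducible factor over the closure
  obtain ⟨R, hR, hRF, hRP⟩ : ∃ R : MvPolynomial (Fin 4) K, Prime R ∧ R ∣ FK ∧
      PK ∣ aeval (substT0 K) R := by
    obtain ⟨f, hf, hfa⟩ := UniqueFactorizationMonoid.exists_prime_factors FK hFK0
    have h1 : PK ∣ aeval (substT0 K) f.prod :=
      hdvd.trans (map_dvd (aeval (substT0 K)) hfa.symm.dvd)
    rw [map_multiset_prod] at h1
    obtain ⟨R, hRf, hRP⟩ := hPp.exists_mem_multiset_map_dvd h1
    exact ⟨R, hf R hRf, (Multiset.dvd_prod hRf).trans hfa.dvd, hRP⟩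
  -- normalise
  obtain ⟨S, m, hm, hS, hSF, hSP⟩ : ∃ (S : MvPolynomial (Fin 4) K) (m : Fin 4 →₀ ℕ),
      coeff m S = 1 ∧ Prime S ∧ S ∣ FK ∧ PK ∣ aeval (substT0 K) S := by
    obtain ⟨m, hm⟩ := MvPolynomial.ne_zero_iff.1 hR.ne_zero
    have hu : IsUnit (C (coeff m R)⁻¹ : MvPolynomial (Fin 4) K) :=
      (IsUnit.mk0 _ (inv_ne_zero hm)).map C
    have hass : Associated R (C (coeff m R)⁻¹ * R) := (associated_unit_mul_left R _ hu).symm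
    refine ⟨C (coeff m R)⁻¹ * R, m, ?_, hass.prime hR, hass.symm.dvd.trans hRF, ?_⟩
    · rw [coeff_C_mul, inv_mul_cancel₀ hm]
    · rw [map_mul]
      exact hRP.mul_left _
  have hfix : ∀ s : K ≃ₐ[F] K, MvPolynomial.map (s : K →+* K) S = S := by
    intro s
    set T := MvPolynomial.map (s : K →+* K) S with hT
    have hTF : T ∣ FK := by
      have := map_dvd (MvPolynomial.map (s : K →+* K)) hSF
      rwa [hFK, map_gal_map] at this
    have hTP : PK ∣ aeval (substT0 K) T := by
      have := map_dvd (MvPolynomial.map (s : K →+* K)) hSP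
      rwa [hPK, map_gal_map, map_substT0] at this
    have hST : S ∣ T := by
      by_contra hST
      apply hndvd
      obtain ⟨U, hU⟩ := hTF
      have h1 : S ∣ U := (hS.dvd_or_dvd (hU ▸ hSF)).resolve_left hST
      have h2 : T * S ∣ FK := hU ▸ mul_dvd_mul_left T h1
      refine dvd_trans ?_ (map_dvd (aeval (substT0 K)) h2)
      rw [map_mul, sq]
      exact mul_dvd_mul hTP hSP
    obtain ⟨c, hc⟩ := hST
    have hT0 : T ≠ 0 := by
      intro h0
      have := congrArg (coeff m) h0
      rw [hT, coeff_map, hm] at this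
      simp at this
    have hc0 : c ≠ 0 := by
      rintro rfl
      exact hT0 (by rw [hc, mul_zero])
    have hdeg : T.totalDegree ≤ S.totalDegree := by
      rw [hT]
      exact Finset.sup_mono (MvPolynomial.support_map_subset _ _)
    have hdc : c.totalDegree = 0 := by
      have := MvPolynomial.totalDegree_mul_of_isDomain hS.ne_zero hc0
      rw [← hc] at this
      omega
    rw [totalDegree_eq_zero_iff_eq_C] at hdc
    have h3 : coeff m T = 1 := by
      rw [hT, coeff_map, hm, map_one]
    rw [hdc] at hc
    have h4 := h3
    rw [hc, mul_comm, coeff_C_mul, hm, mul_one] at h4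
    rw [hc, h4, C_1, mul_one]
  obtain ⟨G, hG⟩ := descend_fixed S hfix
  refine ⟨G, descend_dvd (K := K) _ _ (by rw [hG]; exact hSF), ?_, by rw [hG]; exact hS.irreducible⟩
  by_contra h0
  have h0 : G.totalDegree = 0 := by omega
  rw [totalDegree_eq_zero_iff_eq_C] at h0
  have hS' : S = C (algebraMap F K (coeff 0 G)) := by
    rw [← hG]
    nth_rewrite 1 [h0]
    rw [map_C]
  apply hS.not_isUnit
  rw [hS']
  refine (IsUnit.mk0 _ ?_).map C
  intro h
  exact hS.ne_zero (by rw [hS', h, C_0])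
end
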